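/- For q ≥ 2, the linear map θ: V_r → V_[adj] determined by θ(σ₀⊗τ) = v^[adj]_τ for τ ∈ σ_q is a linear isomorphism and intertwines the two-copy representation: θ(φ⊗²(U)x) = φ⊗²(U)θ(x) for all U ∈ 𝒩_q and x ∈ V_r. Likewise the linear map θ′: V_r → V_{adj} determined by θ′(σ₀⊗τ) = v^{adj}_τ is a linear isomorphism intertwining φ⊗². In particular V_[adj] and V_{adj} are invariant under φ⊗². -/

import Mathlib

open Matrix MeasureTheory
open scoped Kronecker

noncomputable section

namespace CliffordPaper

/-- The single-qubit Pauli matrices `1, X, Y, Z`. -/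
def pauli1 : Fin 4 → Matrix (Fin 2) (Fin 2) ℂ :=
  ![1, !![0, 1; 1, 0], !![0, -Complex.I; Complex.I, 0], !![1, 0; 0, -1]]

/-- Index type for the computational basis of `q` qubits. -/
abbrev Idx (q : ℕ) := Fin q → Fin 2

/-- The space `M_d` of `d × d` complex matrices, `d = 2^q`. -/
abbrev Mat (q : ℕ) := Matrix (Idx q) (Idx q) ℂ

/-- The space `M_d ⊗ M_d`, realized as matrices indexed by the product index set
(the tensor factors combine via the Kronecker product `⊗ₖ`). -/
abbrev BMat (q : ℕ) := Matrix (Idx q × Idx q) (Idx q × Idx q) ℂ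

/-- The `q`-fold Kronecker product of single-qubit Paulis with labels `a`. -/
def PauliOp {q : ℕ} (a : Fin q → Fin 4) : Mat q :=
  Matrix.of fun x y => ∏ i, pauli1 (a i) (x i) (y i)

/-- `√d` as a complex number, where `d = 2^q`. -/
def sqrtd (q : ℕ) : ℂ := (Real.sqrt (2 ^ q) : ℝ)

/-- The set `σ̂_q` of normalized Pauli operators. -/
def sigmaHat (q : ℕ) : Set (Mat q) :=
  {M | ∃ a : Fin q → Fin 4, M = (sqrtd q)⁻¹ • PauliOp a}

/-- The normalized identity `σ₀ = 1/√d`. -/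
def sigma0 (q : ℕ) : Mat q := (sqrtd q)⁻¹ • (1 : Mat q)

/-- `σ_q = σ̂_q \ {σ₀}`. -/
def sigmaSet (q : ℕ) : Set (Mat q) := sigmaHat q \ {sigma0 q}

/-- `N_τ`: the normalized nonidentity Paulis anticommuting with `τ`. -/
def NSet {q : ℕ} (τ : Mat q) : Set (Mat q) :=
  {σ | σ ∈ sigmaSet q ∧ σ * τ + τ * σ = 0}

/-- `C_τ`: the normalized nonidentity Paulis distinct from `τ` commuting with `τ`. -/
def CSet {q : ℕ} (τ : Mat q) : Set (Mat q) :=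
  {σ | σ ∈ sigmaSet q ∧ σ ≠ τ ∧ σ * τ = τ * σ}

/-- `Ĉ_τ`: the normalized Paulis commuting with `τ`. -/
def CHatSet {q : ℕ} (τ : Mat q) : Set (Mat q) :=
  {σ | σ ∈ sigmaHat q ∧ σ * τ = τ * σ}

/-- The normalized product `σ·τ = √d στ`. -/
def nprod {q : ℕ} (σ τ : Mat q) : Mat q := sqrtd q • (σ * τ)

/-- The Clifford normalizer `𝒩_q`: unitaries mapping normalized Paulis to
signed normalized Paulis under conjugation. -/
def Cliff (q : ℕ) : Set (Mat q) :=
  {U | U ∈ Matrix.unitaryGroup (Idx q) ℂ ∧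
    ∀ σ ∈ sigmaHat q, ∃ τ ∈ sigmaHat q, U * σ * Uᴴ = τ ∨ U * σ * Uᴴ = -τ}

/-- The two-copy representation `φ⊗²(U) : A ⊗ B ↦ (UAU†) ⊗ (UBU†)`, extended linearly. -/
def twoCopy {q : ℕ} (U : Mat q) : BMat q →ₗ[ℂ] BMat q where
  toFun M := (U ⊗ₖ U) * M * (U ⊗ₖ U)ᴴ
  map_add' M N := by
    show (U ⊗ₖ U) * (M + N) * (U ⊗ₖ U)ᴴ = (U ⊗ₖ U) * M * (U ⊗ₖ U)ᴴ + (U ⊗ₖ U) * N * (U ⊗ₖ U)ᴴ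
    rw [Matrix.mul_add, Matrix.add_mul]
  map_smul' c M := by
    show (U ⊗ₖ U) * (c • M) * (U ⊗ₖ U)ᴴ = c • ((U ⊗ₖ U) * M * (U ⊗ₖ U)ᴴ)
    rw [Matrix.mul_smul, Matrix.smul_mul]

/-- The Hilbert–Schmidt inner product `⟨A, B⟩ = tr(A† B)`. -/
def hs {q : ℕ} (A B : BMat q) : ℂ := (Aᴴ * B).trace

/-- A subspace is invariant under the two-copy representation of `𝒩_q`. -/
def IsInvariant (q : ℕ) (W : Submodule ℂ (BMat q)) : Prop :=
  ∀ U ∈ Cliff q, ∀ v ∈ W, twoCopy U v ∈ W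

/-- A nonzero invariant subspace carries an irreducible subrepresentation. -/
def CarriesIrred (q : ℕ) (W : Submodule ℂ (BMat q)) : Prop :=
  W ≠ ⊥ ∧ IsInvariant q W ∧ ∀ W' ≤ W, IsInvariant q W' → W' = ⊥ ∨ W' = W

/-- Two invariant subspaces carry equivalent subrepresentations: there is a linear
isomorphism between them intertwining the two-copy representation. -/
def EquivRep (q : ℕ) (W W' : Submodule ℂ (BMat q)) : Prop :=
  ∃ T : BMat q →ₗ[ℂ] BMat q, Submodule.map T W = W' ∧
    (∀ x ∈ W, T x = 0 → x = 0) ∧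
    ∀ U ∈ Cliff q, ∀ x ∈ W, T (twoCopy U x) = twoCopy U (T x)

/-- `S_{σ,τ} = (σ⊗τ + τ⊗σ)/√2`. -/
def SVec {q : ℕ} (σ τ : Mat q) : BMat q :=
  ((Real.sqrt 2 : ℂ))⁻¹ • (σ ⊗ₖ τ + τ ⊗ₖ σ)

/-- `A_{σ,τ} = (σ⊗τ − τ⊗σ)/√2`. -/
def AVec {q : ℕ} (σ τ : Mat q) : BMat q :=
  ((Real.sqrt 2 : ℂ))⁻¹ • (σ ⊗ₖ τ - τ ⊗ₖ σ)

/-- The trivial sector `V_id`. -/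
def Vid (q : ℕ) : Submodule ℂ (BMat q) :=
  Submodule.span ℂ {sigma0 q ⊗ₖ sigma0 q}

/-- The right adjoint sector `V_r`. -/
def Vr (q : ℕ) : Submodule ℂ (BMat q) :=
  Submodule.span ℂ {M | ∃ τ ∈ sigmaSet q, M = sigma0 q ⊗ₖ τ}

/-- The left adjoint sector `V_l`. -/
def Vl (q : ℕ) : Submodule ℂ (BMat q) :=
  Submodule.span ℂ {M | ∃ τ ∈ sigmaSet q, M = τ ⊗ₖ sigma0 q}

/-- The diagonal sector `V_d`. -/
def Vdiag (q : ℕ) : Submodule ℂ (BMat q) :=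
  Submodule.span ℂ {M | ∃ τ ∈ sigmaSet q, M = τ ⊗ₖ τ}

/-- The symmetric commuting sector `V_[S]`. -/
def VScom (q : ℕ) : Submodule ℂ (BMat q) :=
  Submodule.span ℂ {M | ∃ τ ∈ sigmaSet q, ∃ σ ∈ CSet τ, M = SVec σ τ}

/-- The symmetric anti-commuting sector `V_{S}`. -/
def VSanti (q : ℕ) : Submodule ℂ (BMat q) :=
  Submodule.span ℂ {M | ∃ τ ∈ sigmaSet q, ∃ σ ∈ NSet τ, M = SVec σ τ}

/-- The antisymmetric commuting sector `V_[A]`. -/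
def VAcom (q : ℕ) : Submodule ℂ (BMat q) :=
  Submodule.span ℂ {M | ∃ τ ∈ sigmaSet q, ∃ σ ∈ CSet τ, M = AVec σ τ}

/-- The antisymmetric anti-commuting sector `V_{A}`. -/
def VAanti (q : ℕ) : Submodule ℂ (BMat q) :=
  Submodule.span ℂ {M | ∃ τ ∈ sigmaSet q, ∃ σ ∈ NSet τ, M = AVec σ τ}

/-- `V_[A]` presented with the spanning vectors `A_{σ,σ·τ}`, `σ ∈ C_τ`. -/
def VAcom' (q : ℕ) : Submodule ℂ (BMat q) :=
  Submodule.span ℂ {M | ∃ τ ∈ sigmaSet q, ∃ σ ∈ CSet τ, M = AVec σ (nprod σ τ)}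

/-- `V_0 = span{Σ_{σ∈σ_q} σ⊗σ}`. -/
def V0diag (q : ℕ) : Submodule ℂ (BMat q) :=
  Submodule.span ℂ {∑ᶠ σ ∈ sigmaSet q, σ ⊗ₖ σ}

/-- `V_1`, the "positive" part of the diagonal sector. -/
def V1diag (q : ℕ) : Submodule ℂ (BMat q) :=
  Submodule.span ℂ {v | ∃ lam : Mat q → ℂ,
    v = ∑ᶠ σ ∈ sigmaSet q, lam σ • (σ ⊗ₖ σ) ∧
    (∑ᶠ σ ∈ sigmaSet q, lam σ) = 0 ∧
    ∀ τ ∈ sigmaSet q, (∑ᶠ σ ∈ NSet τ, lam σ) = -((2 ^ q : ℂ) / 2) * lam τ}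

/-- `V_2`, the "negative" part of the diagonal sector. -/
def V2diag (q : ℕ) : Submodule ℂ (BMat q) :=
  Submodule.span ℂ {v | ∃ lam : Mat q → ℂ,
    v = ∑ᶠ σ ∈ sigmaSet q, lam σ • (σ ⊗ₖ σ) ∧
    (∑ᶠ σ ∈ sigmaSet q, lam σ) = 0 ∧
    ∀ τ ∈ sigmaSet q, (∑ᶠ σ ∈ NSet τ, lam σ) = ((2 ^ q : ℂ) / 2) * lam τ}

/-- `v^[adj]_τ = (2|C_τ|)^{-1/2} Σ_{σ∈C_τ} S_{σ,σ·τ}`. -/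
def vadjS {q : ℕ} (τ : Mat q) : BMat q :=
  ((Real.sqrt (2 * ((CSet τ).ncard : ℝ)) : ℂ))⁻¹ • ∑ᶠ σ ∈ CSet τ, SVec σ (nprod σ τ)

/-- `v^{adj}_τ = (2|N_τ|)^{-1/2} Σ_{σ∈N_τ} A_{σ,iσ·τ}`. -/
def vadjA {q : ℕ} (τ : Mat q) : BMat q :=
  ((Real.sqrt (2 * ((NSet τ).ncard : ℝ)) : ℂ))⁻¹ •
    ∑ᶠ σ ∈ NSet τ, AVec σ (Complex.I • nprod σ τ)

/-- The symmetric adjoint sector `V_[adj]`. -/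
def VadjS (q : ℕ) : Submodule ℂ (BMat q) :=
  Submodule.span ℂ {M | ∃ τ ∈ sigmaSet q, M = vadjS τ}

/-- The antisymmetric adjoint sector `V_{adj}`. -/
def VadjA (q : ℕ) : Submodule ℂ (BMat q) :=
  Submodule.span ℂ {M | ∃ τ ∈ sigmaSet q, M = vadjA τ}

/-- The orthogonal complement `V^⊥_{adj}` of `V_{adj}` inside `V_{A}`. -/
def VadjAperp (q : ℕ) : Submodule ℂ (BMat q) :=
  Submodule.span ℂ {v | v ∈ VAanti q ∧ ∀ w ∈ VadjA q, hs w v = 0}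

/-- `V_{1}^τ`. -/
def V1symτ (q : ℕ) (τ : Mat q) : Submodule ℂ (BMat q) :=
  Submodule.span ℂ {v | ∃ lam : Mat q → ℂ,
    v = ∑ᶠ σ ∈ NSet τ, lam σ • SVec σ (Complex.I • nprod σ τ) ∧
    ∀ ν ∈ NSet τ, (∑ᶠ σ ∈ NSet τ ∩ CSet ν, lam σ) - (∑ᶠ σ ∈ NSet τ ∩ NSet ν, lam σ)
      = ((2 ^ q : ℂ) / 2) * lam ν}

/-- `V_{2}^τ`. -/
def V2symτ (q : ℕ) (τ : Mat q) : Submodule ℂ (BMat q) :=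
  Submodule.span ℂ {v | ∃ lam : Mat q → ℂ,
    v = ∑ᶠ σ ∈ NSet τ, lam σ • SVec σ (Complex.I • nprod σ τ) ∧
    ∀ ν ∈ NSet τ, (∑ᶠ σ ∈ NSet τ ∩ CSet ν, lam σ) - (∑ᶠ σ ∈ NSet τ ∩ NSet ν, lam σ)
      = -((2 ^ q : ℂ) / 2) * lam ν}

/-- `V_{1} = ⊕_τ V_{1}^τ`. -/
def V1sym (q : ℕ) : Submodule ℂ (BMat q) := ⨆ τ ∈ sigmaSet q, V1symτ q τ

/-- `V_{2} = ⊕_τ V_{2}^τ`. -/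
def V2sym (q : ℕ) : Submodule ℂ (BMat q) := ⨆ τ ∈ sigmaSet q, V2symτ q τ

/-- The defining property of the map `Θ` on `V_[A]`. -/
def ThetaProp (q : ℕ) (Θ : BMat q →ₗ[ℂ] BMat q) : Prop :=
  ∀ τ ∈ sigmaSet q, ∀ σ ∈ CSet τ,
    Θ (AVec σ (nprod σ τ)) =
      (∑ᶠ σ' ∈ NSet τ ∩ CSet σ, AVec σ' (Complex.I • nprod σ' τ)) -
      ∑ᶠ σ' ∈ NSet τ ∩ NSet σ, AVec σ' (Complex.I • nprod σ' τ)

/-- `V` = span of off-diagonal products `σ⊗σ̂`, `σ ≠ σ̂`. -/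
def Voff (q : ℕ) : Submodule ℂ (BMat q) :=
  Submodule.span ℂ {M | ∃ σ ∈ sigmaSet q, ∃ σ' ∈ sigmaSet q, σ ≠ σ' ∧ M = σ ⊗ₖ σ'}

/-- `V^τ` = span of the `σ⊗σ̂` with `σ·σ̂ ∈ {τ, −τ, iτ, −iτ}`. -/
def Vtau (q : ℕ) (τ : Mat q) : Submodule ℂ (BMat q) :=
  Submodule.span ℂ {M | ∃ σ ∈ sigmaSet q, ∃ σ' ∈ sigmaSet q,
    (nprod σ σ' = τ ∨ nprod σ σ' = -τ ∨ nprod σ σ' = Complex.I • τ ∨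
      nprod σ σ' = -(Complex.I • τ)) ∧ M = σ ⊗ₖ σ'}



/-! ### Helper lemmas -/

lemma sqrtd_ne (q : ℕ) : sqrtd q ≠ 0 := by
  unfold sqrtd
  have : (0:ℝ) < Real.sqrt (2 ^ q) := by positivity
  exact_mod_cast this.ne'

lemma sqrtd_sq (q : ℕ) : sqrtd q * sqrtd q = 2 ^ q := by
  unfold sqrtd
  rw [← Complex.ofReal_mul, Real.mul_self_sqrt (by positivity)]
  push_cast; rfl

/-- Kronecker product of a family of `2 × 2` matrices. -/
def tens {q : ℕ} (m : Fin q → Matrix (Fin 2) (Fin 2) ℂ) : Mat q :=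
  Matrix.of fun x y => ∏ i, m i (x i) (y i)

lemma PauliOp_eq {q : ℕ} (a : Fin q → Fin 4) : PauliOp a = tens fun i => pauli1 (a i) := rfl

lemma tens_mul {q : ℕ} (m n : Fin q → Matrix (Fin 2) (Fin 2) ℂ) :
    tens m * tens n = tens fun i => m i * n i := by
  ext x y
  simp only [tens, Matrix.mul_apply, Matrix.of_apply, ← Finset.prod_mul_distrib]
  rw [Finset.prod_univ_sum]
  simp

lemma tens_trace {q : ℕ} (m : Fin q → Matrix (Fin 2) (Fin 2) ℂ) :
    (tens m).trace = ∏ i, (m i).trace := by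
  simp only [tens, Matrix.trace, Matrix.diag, Matrix.of_apply]
  rw [Finset.prod_univ_sum]
  simp

lemma tens_one {q : ℕ} : tens (fun _ : Fin q => (1 : Matrix (Fin 2) (Fin 2) ℂ)) = 1 := by
  ext x y
  simp only [tens, Matrix.of_apply, Matrix.one_apply]
  by_cases h : x = y
  · simp [h]
  · obtain ⟨i, hi⟩ := Function.ne_iff.mp h
    rw [if_neg h]
    exact Finset.prod_eq_zero (Finset.mem_univ i) (by simp [hi])

lemma pauli1_zero : pauli1 0 = 1 := rfl

lemma pauli1_sq (a : Fin 4) : pauli1 a * pauli1 a = 1 := by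
  fin_cases a <;> ext i j <;> fin_cases i <;> fin_cases j <;>
    simp [pauli1, Matrix.mul_apply, Fin.sum_univ_two]

lemma pauli1_trace (a b : Fin 4) : (pauli1 a * pauli1 b).trace = if a = b then 2 else 0 := by
  fin_cases a <;> fin_cases b <;>
    simp [pauli1, Matrix.trace, Matrix.mul_apply, Fin.sum_univ_two] <;> norm_num

lemma pauli1_anti (a : Fin 4) (ha : a ≠ 0) :
    ∃ b : Fin 4, b ≠ 0 ∧ pauli1 b * pauli1 a = - (pauli1 a * pauli1 b) := by
  fin_cases a
  · exact absurd rfl ha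
  · refine ⟨3, by decide, ?_⟩
    ext i j; fin_cases i <;> fin_cases j <;> simp [pauli1, Matrix.mul_apply, Fin.sum_univ_two]
  · refine ⟨3, by decide, ?_⟩
    ext i j; fin_cases i <;> fin_cases j <;> simp [pauli1, Matrix.mul_apply, Fin.sum_univ_two]
  · refine ⟨1, by decide, ?_⟩
    ext i j; fin_cases i <;> fin_cases j <;> simp [pauli1, Matrix.mul_apply, Fin.sum_univ_two]

lemma PauliOp_trace {q : ℕ} (a b : Fin q → Fin 4) :
    (PauliOp a * PauliOp b).trace = if a = b then 2 ^ q else 0 := by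
  rw [PauliOp_eq, PauliOp_eq, tens_mul, tens_trace]
  simp only [pauli1_trace]
  by_cases h : a = b
  · simp [h]
  · obtain ⟨i, hi⟩ := Function.ne_iff.mp h
    rw [if_neg h]
    exact Finset.prod_eq_zero (Finset.mem_univ i) (by simp [hi])

lemma PauliOp_zero {q : ℕ} : PauliOp (0 : Fin q → Fin 4) = 1 := by
  rw [PauliOp_eq]; simp only [Pi.zero_apply, pauli1_zero]; exact tens_one

lemma PauliOp_sq {q : ℕ} (a : Fin q → Fin 4) : PauliOp a * PauliOp a = 1 := by
  rw [PauliOp_eq, tens_mul]; simp only [pauli1_sq]; exact tens_one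

lemma PauliOp_inj {q : ℕ} {a b : Fin q → Fin 4} (h : PauliOp a = PauliOp b) : a = b := by
  by_contra hab
  have h1 := PauliOp_trace a b
  rw [if_neg hab, ← h, PauliOp_trace, if_pos rfl] at h1
  exact pow_ne_zero q (two_ne_zero : (2:ℂ) ≠ 0) h1

lemma nPauli_inj {q : ℕ} {a b : Fin q → Fin 4}
    (h : (sqrtd q)⁻¹ • PauliOp a = (sqrtd q)⁻¹ • PauliOp b) : a = b :=
  PauliOp_inj (smul_right_injective _ (inv_ne_zero (sqrtd_ne q)) h)

lemma sigma0_eq (q : ℕ) : sigma0 q = (sqrtd q)⁻¹ • PauliOp (0 : Fin q → Fin 4) := by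
  rw [PauliOp_zero]; rfl

lemma sigma0_mem (q : ℕ) : sigma0 q ∈ sigmaHat q := ⟨0, sigma0_eq q⟩

lemma hat_trace {q : ℕ} {σ τ : Mat q} (hσ : σ ∈ sigmaHat q) (hτ : τ ∈ sigmaHat q) [Decidable (σ = τ)] :
    (σ * τ).trace = if σ = τ then 1 else 0 := by
  obtain ⟨a, rfl⟩ := hσ
  obtain ⟨b, rfl⟩ := hτ
  rw [Matrix.smul_mul, Matrix.mul_smul, Matrix.trace_smul, Matrix.trace_smul, PauliOp_trace]
  by_cases h : a = b
  · subst h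
    simp only [if_true, smul_eq_mul]
    rw [← sqrtd_sq]
    field_simp [sqrtd_ne q]
  · rw [if_neg h, if_neg (fun h' => h (nPauli_inj h'))]; simp

lemma hat_sq {q : ℕ} {σ : Mat q} (hσ : σ ∈ sigmaHat q) :
    σ * σ = ((sqrtd q)⁻¹ * (sqrtd q)⁻¹) • (1 : Mat q) := by
  obtain ⟨a, rfl⟩ := hσ
  rw [Matrix.smul_mul, Matrix.mul_smul, PauliOp_sq, smul_smul]

lemma hat_ne_neg {q : ℕ} {σ τ : Mat q} (hσ : σ ∈ sigmaHat q) (hτ : τ ∈ sigmaHat q) :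
    σ ≠ -τ := by
  classical
  intro h
  have h1 := hat_trace hσ hσ
  have h2 := hat_trace hτ hσ
  rw [if_pos rfl] at h1
  nth_rw 1 [h] at h1
  rw [Matrix.neg_mul, Matrix.trace_neg, h2] at h1
  split_ifs at h1 <;> norm_num at h1

lemma hat_finite (q : ℕ) : (sigmaHat q).Finite := by
  have : sigmaHat q = Set.range (fun a : Fin q → Fin 4 => (sqrtd q)⁻¹ • PauliOp a) := by
    ext M; simp [sigmaHat, eq_comm]
  rw [this]; exact Set.finite_range _

lemma CSet_sub {q : ℕ} (τ : Mat q) : CSet τ ⊆ sigmaHat q := fun _ h => h.1.1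

lemma NSet_sub {q : ℕ} (τ : Mat q) : NSet τ ⊆ sigmaHat q := fun _ h => h.1.1

lemma exists_lin {q : ℕ} {V : Type*} [AddCommGroup V] [Module ℂ V] (f : Mat q → V) :
    ∃ L : Mat q →ₗ[ℂ] V, ∀ τ ∈ sigmaHat q, L τ = f τ := by
  classical
  refine ⟨∑ σ ∈ (hat_finite q).toFinset,
    ((Matrix.traceLinearMap (Idx q) ℂ ℂ).comp (LinearMap.mulLeft ℂ σ)).smulRight (f σ), ?_⟩
  intro τ hτ
  rw [LinearMap.sum_apply, Finset.sum_eq_single τ]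
  · simp [hat_trace hτ hτ]
  · intro σ hσ hne
    have hσ' : σ ∈ sigmaHat q := by simpa using hσ
    simp [hat_trace hσ' hτ, hne]
  · intro h; exact absurd (by simpa using hτ) h

/-- The multiplication map `A ⊗ B ↦ A B`. -/
def mulMap (q : ℕ) : BMat q →ₗ[ℂ] Mat q where
  toFun M := Matrix.of fun x y => ∑ z, M (x, z) (z, y)
  map_add' M N := by ext x y; simp [Finset.sum_add_distrib]
  map_smul' c M := by ext x y; simp [Finset.mul_sum]

lemma mulMap_kron {q : ℕ} (A B : Mat q) : mulMap q (A ⊗ₖ B) = A * B := by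
  ext x y; simp [mulMap, Matrix.mul_apply]

lemma NSet_nonempty {q : ℕ} {τ : Mat q} (hτ : τ ∈ sigmaSet q) : (NSet τ).Nonempty := by
  obtain ⟨⟨a, rfl⟩, h0⟩ := hτ
  have ha : a ≠ 0 := by
    rintro rfl; exact h0 (sigma0_eq q).symm
  obtain ⟨i, hi⟩ := Function.ne_iff.mp ha
  obtain ⟨c, hc, hanti⟩ := pauli1_anti (a i) hi
  refine ⟨(sqrtd q)⁻¹ • PauliOp (Pi.single i c), ⟨⟨_, rfl⟩, ?_⟩, ?_⟩
  · intro h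
    rw [Set.mem_singleton_iff, sigma0_eq] at h
    have := congrFun (nPauli_inj h) i
    simp at this; exact hc this
  · have key : PauliOp (Pi.single i c) * PauliOp a = - (PauliOp a * PauliOp (Pi.single i c)) := by
      simp only [PauliOp_eq, tens_mul]
      ext x y
      simp only [tens, Matrix.of_apply, Matrix.neg_apply]
      rw [← Finset.mul_prod_erase _ _ (Finset.mem_univ i),
        ← Finset.mul_prod_erase (f := fun j => (pauli1 (a j) * pauli1 ((Pi.single i c : Fin q → Fin 4) j)) (x j) (y j))
          _ (Finset.mem_univ i)]
      simp only [Pi.single_eq_same]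
      rw [hanti, Matrix.neg_apply, neg_mul]
      congr 2
      refine Finset.prod_congr rfl fun j hj => ?_
      rw [Pi.single_eq_of_ne (Finset.ne_of_mem_erase hj), pauli1_zero, one_mul, mul_one]
    simp only [Matrix.smul_mul, Matrix.mul_smul, key, smul_neg]
    simp

lemma CSet_nonempty {q : ℕ} (hq : 2 ≤ q) {τ : Mat q} (hτ : τ ∈ sigmaSet q) :
    (CSet τ).Nonempty := by
  obtain ⟨⟨a, rfl⟩, h0⟩ := hτ
  have ha : a ≠ 0 := by
    rintro rfl; exact h0 (sigma0_eq q).symm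
  obtain ⟨i, hi⟩ := Function.ne_iff.mp ha
  have : Nontrivial (Fin q) := Fin.nontrivial_iff_two_le.mpr hq
  obtain ⟨j, hj⟩ := exists_ne i
  obtain ⟨c, hc, hcomm⟩ : ∃ c : Fin 4, c ≠ 0 ∧ pauli1 c * pauli1 (a j) = pauli1 (a j) * pauli1 c := by
    by_cases h : a j = 0
    · exact ⟨1, by decide, by rw [h, pauli1_zero, one_mul, mul_one]⟩
    · exact ⟨a j, h, rfl⟩
  refine ⟨(sqrtd q)⁻¹ • PauliOp (Pi.single j c), ⟨⟨_, rfl⟩, ?_⟩, ?_, ?_⟩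
  · intro h
    rw [Set.mem_singleton_iff, sigma0_eq] at h
    have := congrFun (nPauli_inj h) j
    simp at this; exact hc this
  · intro h
    have := congrFun (nPauli_inj h) i
    rw [Pi.single_eq_of_ne hj.symm] at this
    exact hi this.symm
  · have key : PauliOp (Pi.single j c) * PauliOp a = PauliOp a * PauliOp (Pi.single j c) := by
      simp only [PauliOp_eq, tens_mul]
      congr 1
      funext k
      by_cases hk : k = j
      · subst hk; simpa using hcomm
      · rw [Pi.single_eq_of_ne hk, pauli1_zero, one_mul, mul_one]
    simp only [Matrix.smul_mul, Matrix.mul_smul, key]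

lemma twoCopy_kron {q : ℕ} (U A B : Mat q) :
    twoCopy U (A ⊗ₖ B) = (U * A * Uᴴ) ⊗ₖ (U * B * Uᴴ) := by
  show (U ⊗ₖ U) * (A ⊗ₖ B) * (U ⊗ₖ U)ᴴ = _
  rw [Matrix.conjTranspose_kronecker, ← Matrix.mul_kronecker_mul, ← Matrix.mul_kronecker_mul]

lemma conj_mul {q : ℕ} {U : Mat q} (hU : U ∈ Cliff q) (A B : Mat q) :
    U * (A * B) * Uᴴ = (U * A * Uᴴ) * (U * B * Uᴴ) := by
  have h : Uᴴ * U = 1 := (Matrix.mem_unitaryGroup_iff').mp hU.1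
  calc U * (A * B) * Uᴴ = U * A * 1 * B * Uᴴ := by simp only [mul_one, mul_assoc]
    _ = _ := by rw [← h]; simp only [mul_assoc]

lemma conj_inj {q : ℕ} {U : Mat q} (hU : U ∈ Cliff q) {A B : Mat q}
    (h : U * A * Uᴴ = U * B * Uᴴ) : A = B := by
  have h1 : Uᴴ * U = 1 := (Matrix.mem_unitaryGroup_iff').mp hU.1
  have h2 : ∀ C : Mat q, Uᴴ * (U * C * Uᴴ) * U = C := fun C => by
    calc Uᴴ * (U * C * Uᴴ) * U = (Uᴴ * U) * C * (Uᴴ * U) := by simp only [mul_assoc]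
      _ = C := by rw [h1, one_mul, mul_one]
  rw [← h2 A, h, h2 B]

lemma surjOn_of_fin {α : Type*} {S : Set α} (hS : S.Finite) {g : α → α}
    (h : Set.MapsTo g S S) (hi : Set.InjOn g S) : Set.SurjOn g S S :=
  (Set.eq_of_subset_of_ncard_le h.image_subset (hi.ncard_image).ge hS).ge

lemma cliff_perm {q : ℕ} {U : Mat q} (hU : U ∈ Cliff q) :
    ∃ (g : Mat q → Mat q) (s : Mat q → ℂ), Set.BijOn g (sigmaHat q) (sigmaHat q) ∧
      g (sigma0 q) = sigma0 q ∧ (∀ σ, s σ * s σ = 1) ∧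
      ∀ σ ∈ sigmaHat q, U * σ * Uᴴ = s σ • g σ := by
  have h : ∀ σ, ∃ (τ : Mat q) (c : ℂ), c * c = 1 ∧ (σ ∈ sigmaHat q → τ ∈ sigmaHat q ∧
      U * σ * Uᴴ = c • τ) := by
    intro σ
    by_cases hσ : σ ∈ sigmaHat q
    · obtain ⟨τ, hτ, h | h⟩ := hU.2 σ hσ
      · exact ⟨τ, 1, by norm_num, fun _ => ⟨hτ, by rw [h, one_smul]⟩⟩
      · exact ⟨τ, -1, by norm_num, fun _ => ⟨hτ, by rw [h, neg_one_smul]⟩⟩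
    · exact ⟨0, 1, by norm_num, fun h => absurd h hσ⟩
  choose g s hs hg using h
  have hs' : ∀ σ, s σ = 1 ∨ s σ = -1 := fun σ => mul_self_eq_one_iff.mp (hs σ)
  have hinj : Set.InjOn g (sigmaHat q) := by
    intro σ hσ τ hτ hst
    have h1 := (hg σ hσ).2
    have h2 := (hg τ hτ).2
    rw [hst] at h1
    have h3 : U * σ * Uᴴ = U * ((s σ * s τ) • τ) * Uᴴ := by
      rw [Matrix.mul_smul, Matrix.smul_mul, h2, smul_smul, mul_assoc (s σ), hs, mul_one, h1]
    have h4 := conj_inj hU h3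
    have h5 : (s σ * s τ) = 1 ∨ s σ * s τ = -1 := by
      rcases hs' σ with h | h <;> rcases hs' τ with h' | h' <;> simp [h, h']
    rcases h5 with h5 | h5
    · rw [h4, h5, one_smul]
    · rw [h5, neg_one_smul] at h4
      exact absurd h4 (hat_ne_neg hσ hτ)
  have hmaps : Set.MapsTo g (sigmaHat q) (sigmaHat q) := fun σ hσ => (hg σ hσ).1
  refine ⟨g, s, ⟨hmaps, hinj, ?_⟩, ?_, hs, fun σ hσ => (hg σ hσ).2⟩
  · exact surjOn_of_fin (hat_finite q) hmaps hinj
  · have h1 := hg _ (sigma0_mem q)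
    have h2 : U * sigma0 q * Uᴴ = sigma0 q := by
      unfold sigma0
      rw [Matrix.mul_smul, Matrix.smul_mul, mul_one]
      congr 1
      exact (Matrix.mem_unitaryGroup_iff).mp hU.1
    rw [h2] at h1
    rcases hs' (sigma0 q) with h | h
    · rw [h, one_smul] at h1; exact h1.2.symm
    · rw [h, neg_one_smul] at h1
      exact absurd h1.2 (hat_ne_neg (sigma0_mem q) h1.1)

/-- The generic argument. -/
lemma generic {q : ℕ} (v : Mat q → BMat q)
    (h1 : ∀ U ∈ Cliff q, ∀ τ ∈ sigmaSet q, ∃ τ' ∈ sigmaSet q, ∃ c : ℂ,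
      U * τ * Uᴴ = c • τ' ∧ twoCopy U (v τ) = c • v τ')
    (h2 : ∀ τ ∈ sigmaSet q, ∃ c : ℂ, c ≠ 0 ∧ mulMap q (v τ) = c • τ) :
    (∃ θ : BMat q →ₗ[ℂ] BMat q, ∀ τ ∈ sigmaSet q, θ (sigma0 q ⊗ₖ τ) = v τ) ∧
    (∀ θ : BMat q →ₗ[ℂ] BMat q, (∀ τ ∈ sigmaSet q, θ (sigma0 q ⊗ₖ τ) = v τ) →
      Submodule.map θ (Vr q) = Submodule.span ℂ {M | ∃ τ ∈ sigmaSet q, M = v τ} ∧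
      (∀ x ∈ Vr q, θ x = 0 → x = 0) ∧
      ∀ U ∈ Cliff q, ∀ x ∈ Vr q, θ (twoCopy U x) = twoCopy U (θ x)) ∧
    IsInvariant q (Submodule.span ℂ {M | ∃ τ ∈ sigmaSet q, M = v τ}) := by
  refine ⟨?_, ?_, ?_⟩
  · obtain ⟨L, hL⟩ := exists_lin v
    refine ⟨sqrtd q • L.comp (mulMap q), fun τ hτ => ?_⟩
    rw [LinearMap.smul_apply, LinearMap.comp_apply, mulMap_kron, sigma0, Matrix.smul_mul, one_mul,
      map_smul, hL τ hτ.1, smul_smul, mul_inv_cancel₀ (sqrtd_ne q), one_smul]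
  · intro θ hθ
    refine ⟨?_, ?_, ?_⟩
    · rw [Vr, Submodule.map_span]
      congr 1
      ext M
      constructor
      · rintro ⟨_, ⟨τ, hτ, rfl⟩, rfl⟩
        exact ⟨τ, hτ, hθ τ hτ⟩
      · rintro ⟨τ, hτ, rfl⟩
        exact ⟨_, ⟨τ, hτ, rfl⟩, hθ τ hτ⟩
    · have hc : ∀ τ, ∃ c : ℂ, τ ∈ sigmaSet q → c ≠ 0 ∧ mulMap q (v τ) = c • τ := by
        intro τ
        by_cases h : τ ∈ sigmaSet q
        · obtain ⟨c, hc⟩ := h2 τ h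
          exact ⟨c, fun _ => hc⟩
        · exact ⟨0, fun h' => absurd h' h⟩
      choose c hc using hc
      obtain ⟨L, hL⟩ := exists_lin (fun τ : Mat q => (c τ)⁻¹ • (sigma0 q ⊗ₖ τ))
      have key : ∀ x ∈ Vr q, L (mulMap q (θ x)) = x := by
        intro x hx
        induction hx using Submodule.span_induction with
        | mem x h =>
          obtain ⟨τ, hτ, rfl⟩ := h
          rw [hθ τ hτ, (hc τ hτ).2, map_smul, hL τ hτ.1, smul_smul,
            mul_inv_cancel₀ (hc τ hτ).1, one_smul]
        | zero => simp
        | add x y _ _ hx hy => simp only [map_add, hx, hy]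
        | smul a x _ hx => simp only [map_smul, hx]
      intro x hx h0
      rw [← key x hx, h0, map_zero, map_zero]
    · intro U hU x hx
      induction hx using Submodule.span_induction with
      | mem x h =>
        obtain ⟨τ, hτ, rfl⟩ := h
        obtain ⟨τ', hτ', c, hc, hv⟩ := h1 U hU τ hτ
        have h3 : U * sigma0 q * Uᴴ = sigma0 q := by
          unfold sigma0
          rw [Matrix.mul_smul, Matrix.smul_mul, mul_one]
          congr 1
          exact (Matrix.mem_unitaryGroup_iff).mp hU.1
        rw [hθ τ hτ, twoCopy_kron, h3, hc, Matrix.kronecker_smul, map_smul, hθ τ' hτ', hv]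
      | zero => simp
      | add x y _ _ hx hy => simp only [map_add, hx, hy]
      | smul a x _ hx => simp only [map_smul, hx]
  · intro U hU x hx
    induction hx using Submodule.span_induction with
    | mem x h =>
      obtain ⟨τ, hτ, rfl⟩ := h
      obtain ⟨τ', hτ', c, hc, hv⟩ := h1 U hU τ hτ
      rw [hv]
      exact Submodule.smul_mem _ _ (Submodule.subset_span ⟨τ', hτ', rfl⟩)
    | zero => simp
    | add x y _ _ hx hy => rw [map_add]; exact Submodule.add_mem _ hx hy
    | smul a x _ hx => rw [map_smul]; exact Submodule.smul_mem _ _ hx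

lemma twoCopy_finsum {q : ℕ} {W : Type*} [AddCommGroup W] [Module ℂ W] (T : BMat q →ₗ[ℂ] W)
    {S : Set (Mat q)} (hS : S.Finite) (f : Mat q → BMat q) :
    T (∑ᶠ σ ∈ S, f σ) = ∑ᶠ σ ∈ S, T (f σ) :=
  T.toAddMonoidHom.map_finsum_mem f hS

lemma finsum_const' {W : Type*} {α : Type*} [AddCommGroup W] [Module ℂ W]
    {S : Set α} (hS : S.Finite) (f : α → W) (w : W) (h : ∀ σ ∈ S, f σ = w) :
    ∑ᶠ σ ∈ S, f σ = (S.ncard : ℂ) • w := by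
  rw [finsum_mem_eq_finite_toFinset_sum f hS, Finset.sum_congr rfl (g := fun _ => w)
    (fun x hx => h x (by simpa using hx)), Finset.sum_const, Set.ncard_eq_toFinset_card S hS,
    Nat.cast_smul_eq_nsmul]

lemma smul_inj' {q : ℕ} {c : ℂ} (hc : c * c = 1) {A B : Mat q} : c • A = c • B ↔ A = B := by
  have : c ≠ 0 := by rintro rfl; simp at hc
  exact (smul_right_injective _ this).eq_iff

/-- Symmetry data: image of `τ` and bijections on `C_τ`, `N_τ`. -/
lemma sym_data {q : ℕ} {U : Mat q} (hU : U ∈ Cliff q) {τ : Mat q} (hτ : τ ∈ sigmaSet q) :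
    ∃ (g : Mat q → Mat q) (s : Mat q → ℂ), (∀ σ, s σ * s σ = 1) ∧ g τ ∈ sigmaSet q ∧
      (∀ σ ∈ sigmaHat q, U * σ * Uᴴ = s σ • g σ) ∧
      Set.BijOn g (CSet τ) (CSet (g τ)) ∧ Set.BijOn g (NSet τ) (NSet (g τ)) := by
  obtain ⟨g, s, hb, h0, hs, hg⟩ := cliff_perm hU
  have hset : ∀ σ ∈ sigmaHat q, (g σ ∈ sigmaSet q ↔ σ ∈ sigmaSet q) := by
    intro σ hσ
    have : g σ = sigma0 q ↔ σ = sigma0 q := by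
      rw [← hb.injOn.eq_iff hσ (sigma0_mem q), h0]
    simp only [sigmaSet, Set.mem_diff, Set.mem_singleton_iff, this, hb.mapsTo hσ, hσ, true_and]
  have hprod : ∀ σ ∈ sigmaHat q, ∀ ν ∈ sigmaHat q,
      U * (σ * ν) * Uᴴ = (s σ * s ν) • (g σ * g ν) := by
    intro σ hσ ν hν
    rw [conj_mul hU, hg σ hσ, hg ν hν, Matrix.smul_mul, Matrix.mul_smul, smul_smul]
  have hss : ∀ σ ν, (s σ * s ν) * (s σ * s ν) = 1 := by
    intro σ ν
    rw [mul_mul_mul_comm, hs, hs, one_mul]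
  have hcomm : ∀ σ ∈ sigmaHat q, (g σ * g τ = g τ * g σ ↔ σ * τ = τ * σ) := by
    intro σ hσ
    rw [← smul_inj' (hss σ τ), ← hprod σ hσ τ hτ.1, mul_comm (s σ), ← hprod τ hτ.1 σ hσ]
    exact ⟨conj_inj hU, fun h => by rw [h]⟩
  have hanti : ∀ σ ∈ sigmaHat q, (g σ * g τ + g τ * g σ = 0 ↔ σ * τ + τ * σ = 0) := by
    intro σ hσ
    rw [← smul_inj' (hss σ τ), smul_add, ← hprod σ hσ τ hτ.1, mul_comm (s σ),
      ← hprod τ hτ.1 σ hσ, ← Matrix.add_mul, ← Matrix.mul_add, smul_zero]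
    exact ⟨fun h => conj_inj hU (by rw [h]; simp), fun h => by rw [h]; simp⟩
  refine ⟨g, s, hs, (hset τ hτ.1).2 hτ, hg, ⟨?_, hb.injOn.mono (CSet_sub τ), ?_⟩,
    ⟨?_, hb.injOn.mono (NSet_sub τ), ?_⟩⟩
  · rintro σ ⟨h1, h2, h3⟩
    exact ⟨(hset σ h1.1).2 h1, fun h => h2 (hb.injOn h1.1 hτ.1 h), (hcomm σ h1.1).2 h3⟩
  · rintro σ' ⟨h1, h2, h3⟩
    obtain ⟨σ, hσ, rfl⟩ := hb.surjOn h1.1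
    exact ⟨σ, ⟨(hset σ hσ).1 h1, fun h => h2 (by rw [h]), (hcomm σ hσ).1 h3⟩, rfl⟩
  · rintro σ ⟨h1, h3⟩
    exact ⟨(hset σ h1.1).2 h1, (hanti σ h1.1).2 h3⟩
  · rintro σ' ⟨h1, h3⟩
    obtain ⟨σ, hσ, rfl⟩ := hb.surjOn h1.1
    exact ⟨σ, ⟨(hset σ hσ).1 h1, (hanti σ hσ).1 h3⟩, rfl⟩

lemma bij_ncard {q : ℕ} {S T : Set (Mat q)} {g : Mat q → Mat q} (h : Set.BijOn g S T) :
    S.ncard = T.ncard := by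
  rw [← h.image_eq, Set.ncard_image_of_injOn h.injOn]

lemma conj_nprod {q : ℕ} {U : Mat q} (hU : U ∈ Cliff q) {σ τ σ' τ' : Mat q} {a b : ℂ}
    (h1 : U * σ * Uᴴ = a • σ') (h2 : U * τ * Uᴴ = b • τ') :
    U * nprod σ τ * Uᴴ = (a * b) • nprod σ' τ' := by
  unfold nprod
  rw [Matrix.mul_smul, Matrix.smul_mul, conj_mul hU, h1, h2, Matrix.smul_mul, Matrix.mul_smul,
    smul_smul, smul_smul, smul_smul]
  congr 1; ring

lemma intertwineS {q : ℕ} (U : Mat q) (hU : U ∈ Cliff q) (τ : Mat q) (hτ : τ ∈ sigmaSet q) :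
    ∃ τ' ∈ sigmaSet q, ∃ c : ℂ, U * τ * Uᴴ = c • τ' ∧ twoCopy U (vadjS τ) = c • vadjS τ' := by
  obtain ⟨g, s, hs, hgτ, hg, hC, -⟩ := sym_data hU hτ
  refine ⟨g τ, hgτ, s τ, hg τ hτ.1, ?_⟩
  have hfin := (hat_finite q).subset (CSet_sub τ)
  have hfin' := (hat_finite q).subset (CSet_sub (g τ))
  unfold vadjS
  rw [map_smul, twoCopy_finsum _ hfin, smul_comm (s τ), bij_ncard hC]
  congr 1
  rw [smul_finsum_mem hfin']
  refine finsum_mem_eq_of_bijOn g hC fun σ hσ => ?_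
  have h1 := hg σ hσ.1.1
  have h2 := conj_nprod hU h1 (hg τ hτ.1)
  unfold SVec
  rw [map_smul, map_add, twoCopy_kron, twoCopy_kron, h1, h2, smul_comm (s τ)]
  congr 1
  simp only [Matrix.smul_kronecker, Matrix.kronecker_smul, smul_smul, smul_add]
  have : s σ * (s σ * s τ) = s τ := by rw [← mul_assoc, hs, one_mul]
  rw [this, mul_comm (s σ * s τ), this]

lemma intertwineA {q : ℕ} (U : Mat q) (hU : U ∈ Cliff q) (τ : Mat q) (hτ : τ ∈ sigmaSet q) :
    ∃ τ' ∈ sigmaSet q, ∃ c : ℂ, U * τ * Uᴴ = c • τ' ∧ twoCopy U (vadjA τ) = c • vadjA τ' := by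
  obtain ⟨g, s, hs, hgτ, hg, -, hC⟩ := sym_data hU hτ
  refine ⟨g τ, hgτ, s τ, hg τ hτ.1, ?_⟩
  have hfin := (hat_finite q).subset (NSet_sub τ)
  have hfin' := (hat_finite q).subset (NSet_sub (g τ))
  unfold vadjA
  rw [map_smul, twoCopy_finsum _ hfin, smul_comm (s τ), bij_ncard hC]
  congr 1
  rw [smul_finsum_mem hfin']
  refine finsum_mem_eq_of_bijOn g hC fun σ hσ => ?_
  have h1 := hg σ hσ.1.1
  have h2 := conj_nprod hU h1 (hg τ hτ.1)
  unfold AVec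
  rw [map_smul, map_sub, twoCopy_kron, twoCopy_kron, Matrix.mul_smul, Matrix.smul_mul,
    h1, h2, smul_comm (s τ)]
  congr 1
  simp only [Matrix.smul_kronecker, Matrix.kronecker_smul, smul_smul, smul_sub]
  have : s σ * s σ = 1 := hs σ
  congr 2
  · linear_combination (Complex.I * s τ) * this
  · linear_combination (Complex.I * s τ) * this

lemma mulS {q : ℕ} (hq : 2 ≤ q) (τ : Mat q) (hτ : τ ∈ sigmaSet q) :
    ∃ c : ℂ, c ≠ 0 ∧ mulMap q (vadjS τ) = c • τ := by
  have hfin := (hat_finite q).subset (CSet_sub τ)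
  have hpos : 0 < (CSet τ).ncard := (Set.ncard_pos hfin).2 (CSet_nonempty hq hτ)
  unfold vadjS
  rw [map_smul, twoCopy_finsum _ hfin,
    finsum_const' hfin _ (((Real.sqrt 2 : ℂ)⁻¹ * (2 * (sqrtd q)⁻¹)) • τ), smul_smul, smul_smul]
  · refine ⟨_, ?_, rfl⟩
    have h1 : (Real.sqrt (2 * ((CSet τ).ncard : ℝ)) : ℂ) ≠ 0 := by
      have : 0 < Real.sqrt (2 * ((CSet τ).ncard : ℝ)) := by positivity
      exact_mod_cast this.ne'
    have h2 : (Real.sqrt 2 : ℂ) ≠ 0 := by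
      have : 0 < Real.sqrt 2 := by positivity
      exact_mod_cast this.ne'
    have h3 : ((CSet τ).ncard : ℂ) ≠ 0 := by exact_mod_cast hpos.ne'
    have h4 := sqrtd_ne q
    simp [h1, h2, h3, h4, Set.ncard_eq_zero hfin, (CSet_nonempty hq hτ).ne_empty]
  · rintro σ ⟨h1, -, h3⟩
    have hsq := hat_sq h1.1
    unfold SVec nprod
    rw [map_smul, map_add, mulMap_kron, mulMap_kron, Matrix.mul_smul, Matrix.smul_mul,
      ← mul_assoc, h3, mul_assoc τ, hsq, Matrix.mul_smul, Matrix.smul_mul, mul_one, one_mul,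
      ← two_smul ℂ, smul_smul, smul_smul, smul_smul]
    congr 1
    field_simp [sqrtd_ne q]

lemma mulA {q : ℕ} (τ : Mat q) (hτ : τ ∈ sigmaSet q) :
    ∃ c : ℂ, c ≠ 0 ∧ mulMap q (vadjA τ) = c • τ := by
  have hfin := (hat_finite q).subset (NSet_sub τ)
  have hpos : 0 < (NSet τ).ncard := (Set.ncard_pos hfin).2 (NSet_nonempty hτ)
  unfold vadjA
  rw [map_smul, twoCopy_finsum _ hfin,
    finsum_const' hfin _ (((Real.sqrt 2 : ℂ)⁻¹ * (2 * Complex.I * (sqrtd q)⁻¹)) • τ),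
    smul_smul, smul_smul]
  · refine ⟨_, ?_, rfl⟩
    have h1 : (Real.sqrt (2 * ((NSet τ).ncard : ℝ)) : ℂ) ≠ 0 := by
      have : 0 < Real.sqrt (2 * ((NSet τ).ncard : ℝ)) := by positivity
      exact_mod_cast this.ne'
    have h2 : (Real.sqrt 2 : ℂ) ≠ 0 := by
      have : 0 < Real.sqrt 2 := by positivity
      exact_mod_cast this.ne'
    have h3 : ((NSet τ).ncard : ℂ) ≠ 0 := by exact_mod_cast hpos.ne'
    have h4 := sqrtd_ne q
    simp [h1, h2, h3, h4, Set.ncard_eq_zero hfin, (NSet_nonempty hτ).ne_empty]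
  · rintro σ ⟨h1, h3⟩
    have hsq := hat_sq h1.1
    have h3' := eq_neg_of_add_eq_zero_left h3
    have e1 : σ * (σ * τ) = ((sqrtd q)⁻¹ * (sqrtd q)⁻¹) • τ := by
      rw [← mul_assoc, hsq, Matrix.smul_mul, one_mul]
    have e2 : σ * τ * σ = -(((sqrtd q)⁻¹ * (sqrtd q)⁻¹) • τ) := by
      rw [h3', Matrix.neg_mul, mul_assoc, hsq, Matrix.mul_smul, mul_one]
    unfold AVec nprod
    rw [map_smul, map_sub, mulMap_kron, mulMap_kron]
    simp only [Matrix.mul_smul, Matrix.smul_mul, e1, e2, smul_neg, sub_neg_eq_add]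
    rw [← two_smul ℂ, smul_smul, smul_smul, smul_smul, smul_smul]
    congr 1
    field_simp [sqrtd_ne q]

/-- the maps `θ : σ₀⊗τ ↦ v^[adj]_τ` and `θ' : σ₀⊗τ ↦ v^{adj}_τ` are
linear isomorphisms of `V_r` onto `V_[adj]` resp. `V_{adj}` intertwining the two-copy
representation; in particular `V_[adj]` and `V_{adj}` are invariant. -/
theorem statement6 (q : ℕ) (hq : 2 ≤ q) :
    (∃ θ : BMat q →ₗ[ℂ] BMat q, ∀ τ ∈ sigmaSet q, θ (sigma0 q ⊗ₖ τ) = vadjS τ) ∧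
    (∀ θ : BMat q →ₗ[ℂ] BMat q, (∀ τ ∈ sigmaSet q, θ (sigma0 q ⊗ₖ τ) = vadjS τ) →
      Submodule.map θ (Vr q) = VadjS q ∧
      (∀ x ∈ Vr q, θ x = 0 → x = 0) ∧
      ∀ U ∈ Cliff q, ∀ x ∈ Vr q, θ (twoCopy U x) = twoCopy U (θ x)) ∧
    (∃ θ' : BMat q →ₗ[ℂ] BMat q, ∀ τ ∈ sigmaSet q, θ' (sigma0 q ⊗ₖ τ) = vadjA τ) ∧
    (∀ θ' : BMat q →ₗ[ℂ] BMat q, (∀ τ ∈ sigmaSet q, θ' (sigma0 q ⊗ₖ τ) = vadjA τ) →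
      Submodule.map θ' (Vr q) = VadjA q ∧
      (∀ x ∈ Vr q, θ' x = 0 → x = 0) ∧
      ∀ U ∈ Cliff q, ∀ x ∈ Vr q, θ' (twoCopy U x) = twoCopy U (θ' x)) ∧
    IsInvariant q (VadjS q) ∧ IsInvariant q (VadjA q) := by
  obtain ⟨a1, a2, a3⟩ := generic (q := q) vadjS intertwineS (mulS hq)
  obtain ⟨b1, b2, b3⟩ := generic (q := q) vadjA intertwineA mulA
  exact ⟨a1, a2, b1, b2, a3, b3⟩

end CliffordPaper
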